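/- Let μ be a full Borel probability measure on ℝ^d. Call a nonzero idempotent matrix J ∈ D(μ) primitive if there is no nonzero idempotent K ∈ D(μ) with K ≠ J satisfying JK = KJ = K. Then there exist an integer q with 1 ≤ q ≤ d and nonzero primitive idempotents J_1, …, J_q ∈ D(μ) such that J_1 + J_2 + … + J_q = I and J_r J_s = J_s J_r = 0 whenever 1 ≤ r ≠ s ≤ q. -/

import Mathlib

open MeasureTheory Filter Topology Matrix

/-- Convolution of two Borel measures on `ℝ^d`. -/
noncomputable def mconv {d : ℕ} (μ ν : Measure (Fin d → ℝ)) : Measure (Fin d → ℝ) :=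
  (μ.prod ν).map (fun p => p.1 + p.2)

/-- The Urbanik decomposability semigroup `D(μ)`: all matrices `A` such that
`μ = (A_*μ) ∗ ν` for some probability measure `ν`. -/
def UrbanikD {d : ℕ} (μ : Measure (Fin d → ℝ)) : Set (Matrix (Fin d) (Fin d) ℝ) :=
  {A | ∃ ν : Measure (Fin d → ℝ), IsProbabilityMeasure ν ∧ μ = mconv (μ.map A.mulVec) ν}

/-- A measure on `ℝ^d` is full if its support is not contained in any hyperplane,
i.e. no translate `v + L` of a proper linear subspace `L` carries all of its mass. -/
def IsFull {d : ℕ} (μ : Measure (Fin d → ℝ)) : Prop :=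
  ∀ (v : Fin d → ℝ) (L : Submodule ℝ (Fin d → ℝ)), L ≠ ⊤ → μ {x | x - v ∈ L} < 1

/-- Weak convergence of a sequence of measures on `ℝ^d`. -/
def WeakLim {d : ℕ} (μs : ℕ → Measure (Fin d → ℝ)) (μ : Measure (Fin d → ℝ)) : Prop :=
  ∀ f : BoundedContinuousFunction (Fin d → ℝ) ℝ,
    Tendsto (fun n => ∫ x, f x ∂(μs n)) atTop (𝓝 (∫ x, f x ∂μ))

/-- Partial sums `S_n = X_1 + ... + X_n`. -/
def partialSum {Ω : Type*} {d : ℕ} (X : ℕ → Ω → (Fin d → ℝ)) (n : ℕ) (ω : Ω) :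
    Fin d → ℝ :=
  ∑ j ∈ Finset.Icc 1 n, X j ω

/-- The triangular array `(A_n X_j : 1 ≤ j ≤ n, n ≥ 1)` is infinitesimal:
`sup_{1 ≤ j ≤ n} P(‖A_n X_j‖ ≥ ε) → 0` as `n → ∞`, for every `ε > 0`. -/
def Infinitesimal {Ω : Type*} [MeasurableSpace Ω] {d : ℕ} (P : Measure Ω)
    (A : ℕ → Matrix (Fin d) (Fin d) ℝ) (X : ℕ → Ω → (Fin d → ℝ)) : Prop :=
  ∀ ε > (0 : ℝ), ∀ δ > (0 : ℝ), ∃ N : ℕ, ∀ n ≥ N, ∀ j : ℕ, 1 ≤ j → j ≤ n →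
    (P {ω | ε ≤ ‖(A n).mulVec (X j ω)‖}).toReal < δ

/-- A nonzero idempotent `J ∈ D(μ)` is primitive if there is no nonzero idempotent
`K ∈ D(μ)`, `K ≠ J`, with `JK = KJ = K`. -/
def IsPrimitiveIdem {d : ℕ} (μ : Measure (Fin d → ℝ)) (J : Matrix (Fin d) (Fin d) ℝ) :
    Prop :=
  J ∈ UrbanikD μ ∧ J ≠ 0 ∧ J * J = J ∧
    ¬ ∃ K ∈ UrbanikD μ, K ≠ 0 ∧ K ≠ J ∧ K * K = K ∧ J * K = K ∧ K * J = K

/-- A convolution factor on the real line which leaves a probability measure unchanged is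
concentrated at the origin. -/
lemma ae_eq_zero_of_conv_eq_self {α β : Measure ℝ} [IsProbabilityMeasure α]
    [IsProbabilityMeasure β] (h : Measure.conv α β = α) : ∀ᵐ x ∂β, x = 0 := by
  have hone : ∀ᶠ t in 𝓝 (0 : ℝ), charFun β t = 1 := by
    have hne : ∀ᶠ t in 𝓝 (0 : ℝ), charFun α t ≠ 0 :=
      (continuous_charFun (μ := α)).continuousAt.eventually_ne (by simp)
    filter_upwards [hne] with t ht
    have hmul := charFun_conv (μ := α) (ν := β) t
    rw [h] at hmul
    exact mul_left_cancel₀ ht (by rw [mul_one, ← hmul])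
  have hcos : ∀ t : ℝ, charFun β t = 1 → ∀ᵐ x ∂β, Real.cos (t * x) = 1 := by
    intro t ht
    have hre : ∫ x, Real.cos (t * x) ∂β = 1 := by
      have hint : Integrable (fun x : ℝ => Complex.exp (t * x * Complex.I)) β := by
        refine Integrable.of_bound (C := 1) (by fun_prop) (ae_of_all _ fun x => ?_)
        rw [← Complex.ofReal_mul, Complex.norm_exp_ofReal_mul_I]
      have hr := integral_re hint
      rw [← charFun_apply_real, ht] at hr
      simpa [← Complex.ofReal_mul, Complex.exp_ofReal_mul_I_re] using hr
    have hint : Integrable (fun x : ℝ => Real.cos (t * x)) β :=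
      Integrable.of_bound (C := 1) (by fun_prop)
        (ae_of_all _ fun x => by simpa using Real.abs_cos_le_one _)
    have hzero : ∫ x, (1 - Real.cos (t * x)) ∂β = 0 := by
      rw [integral_sub (integrable_const _) hint, hre]
      simp
    rw [integral_eq_zero_iff_of_nonneg (fun x => sub_nonneg.2 (Real.cos_le_one _))
      ((integrable_const _).sub hint)] at hzero
    filter_upwards [hzero] with x hx
    exact (sub_eq_zero.1 hx).symm
  have hlim : Tendsto (fun n : ℕ => 1 / ((n : ℝ) + 1)) atTop (𝓝 0) :=
    tendsto_one_div_add_atTop_nhds_zero_nat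
  have hall : ∀ᵐ x ∂β, ∀ n : ℕ, charFun β (1 / ((n : ℝ) + 1)) = 1 →
      Real.cos (1 / ((n : ℝ) + 1) * x) = 1 := by
    refine ae_all_iff.2 fun n => ?_
    by_cases hn : charFun β (1 / ((n : ℝ) + 1)) = 1
    · filter_upwards [hcos _ hn] with x hx _ using hx
    · exact ae_of_all _ fun x hx => absurd hx hn
  filter_upwards [hall] with x hx
  have hsmall : Tendsto (fun n : ℕ => 1 / ((n : ℝ) + 1) * x) atTop (𝓝 0) := by
    simpa using hlim.mul_const x
  have hmem : Set.Ioo (-(2 * Real.pi)) (2 * Real.pi) ∈ 𝓝 (0 : ℝ) :=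
    Ioo_mem_nhds (by linarith [Real.pi_pos]) (by linarith [Real.pi_pos])
  obtain ⟨n, hn, hb⟩ := ((hlim.eventually hone).and (hsmall.eventually hmem)).exists
  have := (Real.cos_eq_one_iff_of_lt_of_lt hb.1 hb.2).1 (hx n hn)
  have hpos : (0 : ℝ) < 1 / ((n : ℝ) + 1) := by positivity
  exact (mul_eq_zero.1 this).resolve_left hpos.ne'

section

variable {d : ℕ} {μ : Measure (Fin d → ℝ)}

lemma measurable_mulVec (A : Matrix (Fin d) (Fin d) ℝ) : Measurable A.mulVec :=
  (Continuous.matrix_mulVec continuous_const continuous_id).measurable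

lemma map_mulVec_mconv (A : Matrix (Fin d) (Fin d) ℝ) (μ ν : Measure (Fin d → ℝ))
    [SFinite μ] [SFinite ν] :
    (mconv μ ν).map A.mulVec = mconv (μ.map A.mulVec) (ν.map A.mulVec) :=
  Measure.map_conv_addMonoidHom A.mulVecLin.toAddMonoidHom (measurable_mulVec A)

lemma map_mulVec_map_mulVec (A B : Matrix (Fin d) (Fin d) ℝ) (μ : Measure (Fin d → ℝ)) :
    (μ.map B.mulVec).map A.mulVec = μ.map (A * B).mulVec := by
  rw [Measure.map_map (measurable_mulVec A) (measurable_mulVec B)]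
  congr 1
  ext x : 1
  simp

lemma one_mem_UrbanikD [IsProbabilityMeasure μ] : (1 : Matrix (Fin d) (Fin d) ℝ) ∈ UrbanikD μ := by
  refine ⟨Measure.dirac 0, inferInstance, ?_⟩
  have h : (1 : Matrix (Fin d) (Fin d) ℝ).mulVec = id := by
    ext x : 1
    simp
  rw [h, Measure.map_id]
  exact (Measure.conv_dirac_zero μ).symm

lemma mul_mem_UrbanikD [IsProbabilityMeasure μ] {A B : Matrix (Fin d) (Fin d) ℝ}
    (hA : A ∈ UrbanikD μ) (hB : B ∈ UrbanikD μ) : A * B ∈ UrbanikD μ := by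
  obtain ⟨ν, hν, hA⟩ := hA
  obtain ⟨ρ, hρ, hB⟩ := hB
  have := Measure.isProbabilityMeasure_map (μ := ρ) (measurable_mulVec A).aemeasurable
  refine ⟨Measure.conv (ρ.map A.mulVec) ν, inferInstance, ?_⟩
  calc μ = mconv (μ.map A.mulVec) ν := hA
    _ = mconv ((mconv (μ.map B.mulVec) ρ).map A.mulVec) ν := by rw [← hB]
    _ = mconv (mconv (μ.map (A * B).mulVec) (ρ.map A.mulVec)) ν := by
      rw [map_mulVec_mconv, map_mulVec_map_mulVec]
    _ = _ := Measure.conv_assoc _ _ _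

/-- The cofactor of an idempotent `J ∈ D(μ)` is concentrated on the kernel of `J`. -/
lemma ae_mulVec_eq_zero [IsProbabilityMeasure μ] {J : Matrix (Fin d) (Fin d) ℝ}
    (hJ : J * J = J) {ν : Measure (Fin d → ℝ)} [IsProbabilityMeasure ν]
    (h : μ = mconv (μ.map J.mulVec) ν) : ∀ᵐ x ∂ν, J.mulVec x = 0 := by
  have hmap : mconv (μ.map J.mulVec) (ν.map J.mulVec) = μ.map J.mulVec := by
    conv_rhs => rw [h, map_mulVec_mconv, map_mulVec_map_mulVec, hJ]
  have := Measure.isProbabilityMeasure_map (μ := ν) (measurable_mulVec J).aemeasurable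
  have := Measure.isProbabilityMeasure_map (μ := μ) (measurable_mulVec J).aemeasurable
  have hcoord : ∀ i, ∀ᵐ x ∂ν, J.mulVec x i = 0 := by
    intro i
    have hi : Measurable fun x : Fin d → ℝ => x i := measurable_pi_apply i
    have := Measure.isProbabilityMeasure_map (μ := ν.map J.mulVec) hi.aemeasurable
    have := Measure.isProbabilityMeasure_map (μ := μ.map J.mulVec) hi.aemeasurable
    have hconv : Measure.conv ((μ.map J.mulVec).map fun x => x i)
        ((ν.map J.mulVec).map fun x => x i) = (μ.map J.mulVec).map fun x => x i := by
      conv_rhs => rw [← hmap]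
      exact (Measure.map_conv_addMonoidHom (Pi.evalAddMonoidHom (fun _ : Fin d => ℝ) i) hi).symm
    exact ae_of_ae_map (measurable_mulVec J).aemeasurable
      (ae_of_ae_map hi.aemeasurable (ae_eq_zero_of_conv_eq_self hconv))
  filter_upwards [ae_all_iff.2 hcoord] with x hx
  exact funext hx

lemma one_sub_mem_UrbanikD [IsProbabilityMeasure μ] {J : Matrix (Fin d) (Fin d) ℝ}
    (hmem : J ∈ UrbanikD μ) (hJ : J * J = J) : 1 - J ∈ UrbanikD μ := by
  obtain ⟨ν, hν, h⟩ := hmem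
  have := Measure.isProbabilityMeasure_map (μ := μ) (measurable_mulVec J).aemeasurable
  have hker := ae_mulVec_eq_zero hJ h
  have hνeq : μ.map (1 - J).mulVec = ν := by
    have hzero : (μ.map (0 : Matrix (Fin d) (Fin d) ℝ).mulVec) = Measure.dirac 0 := by
      have : (0 : Matrix (Fin d) (Fin d) ℝ).mulVec = fun _ => 0 := by
        ext x : 1
        simp
      simp [this, Measure.map_const]
    have hid : ν.map (1 - J).mulVec = ν := by
      conv_rhs => rw [← Measure.map_id (μ := ν)]
      refine Measure.map_congr ?_
      filter_upwards [hker] with x hx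
      simp [sub_mulVec, hx]
    have := Measure.isProbabilityMeasure_map (μ := ν) (measurable_mulVec (1 - J)).aemeasurable
    conv_lhs => rw [h, map_mulVec_mconv, map_mulVec_map_mulVec, sub_mul, hJ, one_mul, sub_self,
      hzero, hid]
    exact Measure.dirac_zero_conv ν
  refine ⟨μ.map J.mulVec, this, ?_⟩
  rw [hνeq]
  conv_lhs => rw [h]
  exact Measure.conv_comm _ _

lemma trace_eq_rank_of_idempotent {J : Matrix (Fin d) (Fin d) ℝ} (hJ : J * J = J) :
    J.trace = J.rank := by
  have hid : IsIdempotentElem (Matrix.toLin' J) := by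
    rw [IsIdempotentElem, Module.End.mul_eq_comp, ← Matrix.toLin'_mul, hJ]
  have h := (LinearMap.IsIdempotentElem.isProj_range _ hid).trace
  rw [Matrix.trace_toLin'_eq] at h
  exact h

lemma one_le_rank_of_ne_zero {J : Matrix (Fin d) (Fin d) ℝ} (h : J ≠ 0) : 1 ≤ J.rank := by
  refine Nat.one_le_iff_ne_zero.2 fun h0 => h ?_
  have hbot : LinearMap.range J.mulVecLin = ⊥ := Submodule.finrank_eq_zero.1 h0
  exact (LinearEquiv.map_eq_zero_iff Matrix.toLin').1 (LinearMap.range_eq_bot.1 hbot)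

/-- Every idempotent of `D(μ)` is a finite sum of mutually orthogonal primitive idempotents. -/
lemma exists_orthogonal_primitive_sum [IsProbabilityMeasure μ] (n : ℕ) :
    ∀ J ∈ UrbanikD μ, J * J = J → J.rank ≤ n →
      ∃ (ι : Type) (_ : Fintype ι) (P : ι → Matrix (Fin d) (Fin d) ℝ),
        (∀ r, IsPrimitiveIdem μ (P r)) ∧ ∑ r, P r = J ∧ ∀ r s, r ≠ s → P r * P s = 0 := by
  induction n with
  | zero =>
    intro J _ _ hr
    refine ⟨Empty, inferInstance, Empty.elim, fun r => r.elim, ?_, fun r => r.elim⟩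
    by_contra hJ0
    exact absurd (one_le_rank_of_ne_zero (J := J) fun h => hJ0 (by simp [h])) (by omega)
  | succ n ih =>
    intro J hmem hJ hr
    by_cases hJ0 : J = 0
    · exact ⟨Empty, inferInstance, Empty.elim, fun r => r.elim, by simp [hJ0], fun r => r.elim⟩
    by_cases hprim : IsPrimitiveIdem μ J
    · exact ⟨Unit, inferInstance, fun _ => J, fun _ => hprim, by simp,
        fun r s hrs => absurd (Subsingleton.elim r s) hrs⟩
    obtain ⟨K, hKmem, hK0, hKJ, hK, hJK, hKJ'⟩ : ∃ K ∈ UrbanikD μ, K ≠ 0 ∧ K ≠ J ∧ K * K = K ∧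
        J * K = K ∧ K * J = K := by
      by_contra hno
      exact hprim ⟨hmem, hJ0, hJ, hno⟩
    have hLmem : J - K ∈ UrbanikD μ := by
      have := mul_mem_UrbanikD hmem (one_sub_mem_UrbanikD hKmem hK)
      rwa [mul_sub, mul_one, hJK] at this
    have hL : (J - K) * (J - K) = J - K := by
      simp [mul_sub, sub_mul, hJ, hK, hJK, hKJ']
    have hL0 : J - K ≠ 0 := sub_ne_zero.2 hKJ.symm
    have hrank : K.rank + (J - K).rank = J.rank := by
      have h := Matrix.trace_sub J K
      rw [trace_eq_rank_of_idempotent hL, trace_eq_rank_of_idempotent hJ,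
        trace_eq_rank_of_idempotent hK] at h
      have : ((K.rank + (J - K).rank : ℕ) : ℝ) = J.rank := by
        push_cast
        linarith
      exact_mod_cast this
    have hKpos := one_le_rank_of_ne_zero hK0
    have hLpos := one_le_rank_of_ne_zero hL0
    obtain ⟨ι, hι, P, hP, hPsum, hPorth⟩ := ih K hKmem hK (by omega)
    obtain ⟨κ, hκ, Q, hQ, hQsum, hQorth⟩ := ih (J - K) hLmem hL (by omega)
    have hPK : ∀ r, P r * K = P r := fun r => by
      rw [← hPsum, Finset.mul_sum, Finset.sum_eq_single r (fun s _ hs => hPorth r s hs.symm)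
        (by simp), (hP r).2.2.1]
    have hKP : ∀ r, K * P r = P r := fun r => by
      rw [← hPsum, Finset.sum_mul, Finset.sum_eq_single r (fun s _ hs => hPorth s r hs)
        (by simp), (hP r).2.2.1]
    have hQL : ∀ r, Q r * (J - K) = Q r := fun r => by
      rw [← hQsum, Finset.mul_sum, Finset.sum_eq_single r (fun s _ hs => hQorth r s hs.symm)
        (by simp), (hQ r).2.2.1]
    have hLQ : ∀ r, (J - K) * Q r = Q r := fun r => by
      rw [← hQsum, Finset.sum_mul, Finset.sum_eq_single r (fun s _ hs => hQorth s r hs)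
        (by simp), (hQ r).2.2.1]
    have hKL : K * (J - K) = 0 := by rw [mul_sub, hKJ', hK, sub_self]
    have hLK : (J - K) * K = 0 := by rw [sub_mul, hJK, hK, sub_self]
    refine ⟨ι ⊕ κ, inferInstance, Sum.elim P Q, ?_, by simp [hPsum, hQsum], ?_⟩
    · rintro (r | r)
      exacts [hP r, hQ r]
    · rintro (r | r) (s | s) hrs
      · exact hPorth r s fun h => hrs (congrArg _ h)
      · change P r * Q s = 0
        rw [← hPK, ← hLQ, mul_assoc, ← mul_assoc K, hKL, zero_mul, mul_zero]
      · change Q r * P s = 0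
        rw [← hQL, ← hKP, mul_assoc, ← mul_assoc (J - K), hLK, zero_mul, mul_zero]
      · exact hQorth r s fun h => hrs (congrArg _ h)

end

/-- **(24).** For a full probability measure `μ` on `ℝ^d` there are finitely many
nonzero primitive idempotents `J_1, ..., J_q ∈ D(μ)`, `1 ≤ q ≤ d`, with
`J_1 + ... + J_q = I` and `J_r J_s = J_s J_r = 0` for `r ≠ s`. -/
theorem exists_primitive_idempotent_decomposition
    {d : ℕ} (hd : 0 < d) (μ : Measure (Fin d → ℝ)) [IsProbabilityMeasure μ]
    (hfull : IsFull μ) :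
    ∃ q : ℕ, 1 ≤ q ∧ q ≤ d ∧
      ∃ J : Fin q → Matrix (Fin d) (Fin d) ℝ,
        (∀ r, IsPrimitiveIdem μ (J r)) ∧
        (∑ r, J r) = 1 ∧
        ∀ r s, r ≠ s → J r * J s = 0 ∧ J s * J r = 0 := by
  obtain ⟨ι, hι, P, hP, hsum, horth⟩ := exists_orthogonal_primitive_sum (μ := μ) _ 1
    one_mem_UrbanikD (mul_one 1) le_rfl
  let e := Fintype.equivFin ι
  refine ⟨Fintype.card ι, ?_, ?_, P ∘ e.symm, fun r => hP _, ?_, fun r s hrs =>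
    ⟨horth _ _ (e.symm.injective.ne hrs), horth _ _ (e.symm.injective.ne hrs.symm)⟩⟩
  · by_contra hlt
    have : IsEmpty ι := Fintype.card_eq_zero_iff.1 (by omega)
    have : Nonempty (Fin d) := ⟨⟨0, hd⟩⟩
    simp at hsum
  · have htrace : ∑ r, (P r).rank = d := by
      have h := congrArg Matrix.trace hsum
      rw [Matrix.trace_sum, Matrix.trace_one, Fintype.card_fin,
        Finset.sum_congr rfl fun r _ => trace_eq_rank_of_idempotent (hP r).2.2.1] at h
      exact_mod_cast h
    rw [← htrace, ← Finset.card_univ, Finset.card_eq_sum_ones]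
    exact Finset.sum_le_sum fun r _ => one_le_rank_of_ne_zero (hP r).2.1
  · rw [← hsum]
    exact Equiv.sum_comp e.symm P
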